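/- arXiv:1309.5898 — 2 statements merged into one kernel-verified Lean document; each statement's English description precedes it below -/
import Mathlib

section
/- Let L ∈ L_{m,n} be a quantum channel with rank Z(L) = k which is not an extreme point of L_{m,n}. Then there exist quantum channels L_1, L_2 ∈ L_{m,n} with rank Z(L_1) ≤ k−1 and rank Z(L_2) ≤ k−1, and t ∈ (0,1), such that L = t·L_1 + (1−t)·L_2. -/
open Matrix
open scoped ComplexOrder

/-- The Choi matrix of a linear map `L` from `m × m` to `n × n` complex matrices:
its `((i,p),(j,q))` entry is the `(p,q)` entry of `L(E_{ij})`. -/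
def choi (m n : ℕ) (L : Matrix (Fin m) (Fin m) ℂ →ₗ[ℂ] Matrix (Fin n) (Fin n) ℂ) :
    Matrix (Fin m × Fin n) (Fin m × Fin n) ℂ :=
  Matrix.of fun ip jq => L (Matrix.single ip.1 jq.1 (1 : ℂ)) ip.2 jq.2

/-- `L` is a quantum channel: it admits a Kraus representation
`L(X) = ∑ Aᵢ X Aᵢ*` with `∑ Aᵢ* Aᵢ = I`. -/
def IsChannel (m n : ℕ) (L : Matrix (Fin m) (Fin m) ℂ →ₗ[ℂ] Matrix (Fin n) (Fin n) ℂ) : Prop :=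
  ∃ (k : ℕ) (A : Fin k → Matrix (Fin n) (Fin m) ℂ),
    (∀ X, L X = ∑ i, A i * X * (A i)ᴴ) ∧ ∑ i, (A i)ᴴ * A i = 1

/-- `L` is an extreme point of the convex set of quantum channels. -/
def IsExtremeChannel (m n : ℕ)
    (L : Matrix (Fin m) (Fin m) ℂ →ₗ[ℂ] Matrix (Fin n) (Fin n) ℂ) : Prop :=
  IsChannel m n L ∧
    ∀ L₁ L₂ : Matrix (Fin m) (Fin m) ℂ →ₗ[ℂ] Matrix (Fin n) (Fin n) ℂ,
      IsChannel m n L₁ → IsChannel m n L₂ → ∀ t : ℝ, 0 < t → t < 1 →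
      L = (t : ℂ) • L₁ + ((1 - t : ℝ) : ℂ) • L₂ → L₁ = L ∧ L₂ = L

namespace Matrix

variable {ι κ : Type*} [Fintype ι] [Fintype κ]

/-- A positive semidefinite matrix factors as `B * Bᴴ`, where `B` has a left inverse and as many
columns as the rank. -/
lemma PosSemidef.exists_mul_conjTranspose_of_rank [DecidableEq ι] {Z : Matrix ι ι ℂ}
    (hZ : Z.PosSemidef) :
    ∃ (B : Matrix ι (Fin Z.rank) ℂ) (C : Matrix (Fin Z.rank) ι ℂ), B * Bᴴ = Z ∧ C * B = 1 := by
  have hcard := hZ.1.rank_eq_card_non_zero_eigs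
  let e : Fin Z.rank ≃ {i // hZ.1.eigenvalues i ≠ 0} := Fintype.equivOfCardEq (by simpa using hcard)
  let U : Matrix ι ι ℂ := hZ.1.eigenvectorUnitary
  let r : ι → ℂ := fun i => (Real.sqrt (hZ.1.eigenvalues i) : ℂ)
  have hr : ∀ i, r i * r i = (hZ.1.eigenvalues i : ℂ) := fun i => by
    rw [← Complex.ofReal_mul, Real.mul_self_sqrt (hZ.eigenvalues_nonneg i)]
  have hr' : ∀ i, star (r i) = r i := fun i => Complex.conj_ofReal _
  have hUU : Uᴴ * U = 1 := Unitary.coe_star_mul_self hZ.1.eigenvectorUnitary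
  have hspec : Z = U * diagonal (fun i => (hZ.1.eigenvalues i : ℂ)) * Uᴴ := by
    conv_lhs => rw [hZ.1.spectral_theorem, Unitary.conjStarAlgAut_apply]
    rfl
  refine ⟨of fun a i => U a (e i) * r (e i), of fun i a => (r (e i))⁻¹ * star (U a (e i)), ?_, ?_⟩
  · ext a b
    refine Eq.trans ?_ (congrFun₂ hspec a b).symm
    rw [mul_apply, mul_apply]
    simp only [mul_diagonal, conjTranspose_apply, of_apply]
    rw [e.sum_comp fun j => U a j * r j * star (U b j * r j)]
    rw [← Finset.sum_subtype (Finset.univ.filter fun j => hZ.1.eigenvalues j ≠ 0) (by simp)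
      fun j => U a j * r j * star (U b j * r j), Finset.sum_filter_of_ne]
    · refine Finset.sum_congr rfl fun j _ => ?_
      rw [← hr, star_mul', hr']
      ring
    · intro j _ hj h0
      exact hj (by simp [r, h0])
  · ext i j
    have h := congrFun₂ hUU (e i) (e j)
    have hne : r (e i) ≠ 0 := by
      intro h0
      have := hr (e i)
      rw [h0, zero_mul] at this
      exact (e i).2 (by exact_mod_cast this.symm)
    simp only [mul_apply, conjTranspose_apply, of_apply] at h ⊢
    calc _ = (r (e i))⁻¹ * (∑ a, star (U a (e i)) * U a (e j)) * r (e j) := by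
          rw [Finset.mul_sum, Finset.sum_mul]
          exact Finset.sum_congr rfl fun a _ => by ring
      _ = _ := by
          rw [h]
          by_cases hij : i = j
          · subst hij; simp [hne]
          · rw [one_apply_ne hij,
              one_apply_ne fun h => hij (e.injective (Subtype.ext h)), mul_zero, zero_mul]

/-- Moving from the identity in the direction of a Hermitian matrix which is not positive
semidefinite, one meets a singular positive semidefinite matrix. -/
lemma IsHermitian.exists_posSemidef_one_add_smul_rank_lt [DecidableEq κ] {H : Matrix κ κ ℂ}
    (hH : H.IsHermitian) (hneg : ¬ H.PosSemidef) :
    ∃ s : ℝ, 0 < s ∧ (1 + (s : ℂ) • H).PosSemidef ∧ (1 + (s : ℂ) • H).rank < Fintype.card κ := by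
  obtain ⟨j, hj⟩ : ∃ j, hH.eigenvalues j < 0 := by
    by_contra! h
    exact hneg (hH.posSemidef_iff_eigenvalues_nonneg.2 h)
  obtain ⟨i, -, hi⟩ := Finset.univ.exists_min_image hH.eigenvalues ⟨j, Finset.mem_univ j⟩
  have hi0 : hH.eigenvalues i < 0 := (hi j (Finset.mem_univ j)).trans_lt hj
  set s : ℝ := (-hH.eigenvalues i)⁻¹ with hs
  have hs0 : 0 < s := inv_pos.2 (neg_pos.2 hi0)
  have hsi : s * hH.eigenvalues i = -1 := by
    rw [hs, inv_neg, neg_mul, inv_mul_cancel₀ hi0.ne]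
  let U : Matrix κ κ ℂ := hH.eigenvectorUnitary
  have hUU : U * Uᴴ = 1 := Unitary.coe_mul_star_self hH.eigenvectorUnitary
  have hspec : H = U * diagonal (fun i => (hH.eigenvalues i : ℂ)) * Uᴴ := by
    conv_lhs => rw [hH.spectral_theorem, Unitary.conjStarAlgAut_apply]
    rfl
  have heq : 1 + (s : ℂ) • H =
      U * diagonal (fun i => ((1 + s * hH.eigenvalues i : ℝ) : ℂ)) * Uᴴ := by
    have hd : diagonal (fun i => ((1 + s * hH.eigenvalues i : ℝ) : ℂ))
        = 1 + (s : ℂ) • diagonal (fun i => (hH.eigenvalues i : ℂ)) := by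
      rw [← diagonal_one, ← diagonal_smul, diagonal_add]
      congr 1
      ext i
      simp
    rw [hd, mul_add, add_mul, mul_one, hUU, mul_smul_comm, smul_mul_assoc, ← hspec]
  refine ⟨s, hs0, ?_, ?_⟩
  · rw [heq]
    refine PosSemidef.mul_mul_conjTranspose_same (PosSemidef.diagonal fun l => ?_) U
    have := mul_le_mul_of_nonneg_left (hi l (Finset.mem_univ l)) hs0.le
    exact Complex.zero_le_real.2 (by linarith)
  · rw [heq]
    refine ((rank_mul_le_left _ _).trans (rank_mul_le_right _ _)).trans_lt ?_
    rw [rank_diagonal]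
    exact Fintype.card_subtype_lt (x := i) (by simp [hsi])

/-- If `D` is Hermitian, traceless, nonzero and vanishes on the kernel of a positive semidefinite
matrix `Z`, then the ray from `Z` in the direction `D` contains a positive semidefinite matrix of
smaller rank. -/
lemma PosSemidef.exists_posSemidef_add_smul_rank_lt {Z D : Matrix ι ι ℂ} (hZ : Z.PosSemidef)
    (hD : D.IsHermitian) (htr : D.trace = 0) (hD0 : D ≠ 0)
    (hker : ∀ x, Z *ᵥ x = 0 → D *ᵥ x = 0) :
    ∃ s : ℝ, 0 < s ∧ (Z + (s : ℂ) • D).PosSemidef ∧ (Z + (s : ℂ) • D).rank < Z.rank := by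
  classical
  obtain ⟨B, C, hB, hCB⟩ := hZ.exists_mul_conjTranspose_of_rank
  have hBC : Bᴴ * Cᴴ = 1 := by rw [← conjTranspose_mul, hCB, conjTranspose_one]
  have hright : D * (Cᴴ * Bᴴ) = D := by
    have hz : Z * (1 - Cᴴ * Bᴴ) = 0 := by
      have : Bᴴ * (Cᴴ * Bᴴ) = Bᴴ := by rw [← Matrix.mul_assoc, hBC, Matrix.one_mul]
      calc Z * (1 - Cᴴ * Bᴴ) = B * Bᴴ - B * (Bᴴ * (Cᴴ * Bᴴ)) := by
            rw [← Matrix.mul_assoc B, hB, Matrix.mul_sub, Matrix.mul_one]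
        _ = 0 := by rw [this, sub_self]
    have hd : D * (1 - Cᴴ * Bᴴ) = 0 := by
      ext a b
      refine congrFun (hker ((1 - Cᴴ * Bᴴ).col b) ?_) a
      ext a'
      exact congrFun₂ hz a' b
    rw [Matrix.mul_sub, Matrix.mul_one, sub_eq_zero] at hd
    exact hd.symm
  have hleft : B * C * D = D := by
    have h := congrArg (fun M : Matrix ι ι ℂ => Mᴴ) hright
    simpa only [conjTranspose_mul, conjTranspose_conjTranspose, hD.eq] using h
  have hfac : D = B * (C * D * Cᴴ) * Bᴴ := by
    calc D = B * C * (D * (Cᴴ * Bᴴ)) := by rw [hright, hleft]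
      _ = _ := by simp only [Matrix.mul_assoc]
  have hH : (C * D * Cᴴ).IsHermitian := isHermitian_mul_mul_conjTranspose C hD
  have hneg : ¬ (C * D * Cᴴ).PosSemidef := fun h => by
    have hp := h.mul_mul_conjTranspose_same B
    rw [← hfac] at hp
    exact hD0 (hp.trace_eq_zero_iff.1 htr)
  obtain ⟨s, hs, hpos, hrk⟩ := hH.exists_posSemidef_one_add_smul_rank_lt hneg
  have heq : Z + (s : ℂ) • D = B * (1 + (s : ℂ) • (C * D * Cᴴ)) * Bᴴ := by
    rw [Matrix.mul_add, Matrix.add_mul, Matrix.mul_one, Matrix.mul_smul, Matrix.smul_mul, ← hfac,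
      hB]
  refine ⟨s, hs, heq ▸ hpos.mul_mul_conjTranspose_same B, ?_⟩
  rw [Fintype.card_fin] at hrk
  rw [heq]
  exact ((rank_mul_le_left _ _).trans (rank_mul_le_right _ _)).trans_lt hrk

/-- The kernel of a proper convex combination of positive semidefinite matrices is contained in
the kernel of each of them. -/
lemma PosSemidef.mulVec_eq_zero_of_smul_add_smul {P Q : Matrix ι ι ℂ} (hP : P.PosSemidef)
    (hQ : Q.PosSemidef) {a b : ℝ} (ha : 0 < a) (hb : 0 < b) {x : ι → ℂ}
    (hx : ((a : ℂ) • P + (b : ℂ) • Q) *ᵥ x = 0) : P *ᵥ x = 0 ∧ Q *ᵥ x = 0 := by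
  have h : (a : ℂ) * (star x ⬝ᵥ P *ᵥ x) + (b : ℂ) * (star x ⬝ᵥ Q *ᵥ x) = 0 := by
    have := congrArg (star x ⬝ᵥ ·) hx
    simpa [add_mulVec, smul_mulVec, dotProduct_add, dotProduct_smul] using this
  have ha' : (0 : ℂ) < a := Complex.zero_lt_real.2 ha
  have hb' : (0 : ℂ) < b := Complex.zero_lt_real.2 hb
  rw [add_eq_zero_iff_of_nonneg (mul_nonneg ha'.le (hP.dotProduct_mulVec_nonneg x))
    (mul_nonneg hb'.le (hQ.dotProduct_mulVec_nonneg x))] at h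
  exact ⟨(hP.dotProduct_mulVec_zero_iff x).1 ((mul_eq_zero.1 h.1).resolve_left ha'.ne'),
    (hQ.dotProduct_mulVec_zero_iff x).1 ((mul_eq_zero.1 h.2).resolve_left hb'.ne')⟩

end Matrix

section Choi

variable {m n : ℕ} {L L' : Matrix (Fin m) (Fin m) ℂ →ₗ[ℂ] Matrix (Fin n) (Fin n) ℂ}

lemma choi_add : choi m n (L + L') = choi m n L + choi m n L' := rfl

lemma choi_sub : choi m n (L - L') = choi m n L - choi m n L' := rfl

lemma choi_smul (c : ℂ) : choi m n (c • L) = c • choi m n L := rfl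

lemma apply_eq_sum_choi (X : Matrix (Fin m) (Fin m) ℂ) (p q : Fin n) :
    L X p q = ∑ i, ∑ j, X i j * choi m n L (i, p) (j, q) := by
  conv_lhs => rw [matrix_eq_sum_single X]
  simp only [map_sum, Matrix.sum_apply]
  refine Finset.sum_congr rfl fun i _ => Finset.sum_congr rfl fun j _ => ?_
  have : single i j (X i j) = X i j • single i j (1 : ℂ) := by simp
  rw [this, map_smul]
  rfl

lemma choi_injective : Function.Injective (choi m n) := fun L L' h => by
  ext1 X
  ext p q
  rw [apply_eq_sum_choi, apply_eq_sum_choi, h]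

/-- Quantum channels are the maps whose Choi matrix is positive semidefinite with partial trace
over the output equal to the identity. -/
lemma isChannel_iff_choi : IsChannel m n L ↔ (choi m n L).PosSemidef ∧
    ∀ i j, ∑ p, choi m n L (i, p) (j, p) = (1 : Matrix (Fin m) (Fin m) ℂ) j i := by
  constructor
  · rintro ⟨k, A, hA, h1⟩
    have hchoi : ∀ i j p q, choi m n L (i, p) (j, q) = ∑ l, A l p i * star (A l q j) := by
      intro i j p q
      simp [choi, hA, Matrix.sum_apply, Matrix.mul_apply, Matrix.single_apply, ite_and]
    refine ⟨posSemidef_iff_eq_sum_vecMulVec.2 ⟨k, fun l ip => A l ip.2 ip.1, ?_⟩, fun i j => ?_⟩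
    · ext ⟨i, p⟩ ⟨j, q⟩
      rw [hchoi, Matrix.sum_apply]
      rfl
    · rw [← h1, Matrix.sum_apply]
      simp only [hchoi, Matrix.mul_apply, conjTranspose_apply]
      rw [Finset.sum_comm]
      simp only [mul_comm]
  · rintro ⟨hpos, htr⟩
    obtain ⟨k, v, hv⟩ := posSemidef_iff_eq_sum_vecMulVec.1 hpos
    have hchoi : ∀ i j p q, choi m n L (i, p) (j, q) = ∑ l, v l (i, p) * star (v l (j, q)) := by
      intro i j p q
      rw [hv, Matrix.sum_apply]
      rfl
    refine ⟨k, fun l => of fun p i => v l (i, p), fun X => ?_, ?_⟩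
    · ext p q
      rw [apply_eq_sum_choi, Matrix.sum_apply]
      simp only [hchoi, Matrix.mul_apply, conjTranspose_apply, of_apply, Finset.mul_sum,
        Finset.sum_mul]
      rw [Finset.sum_comm, Finset.sum_comm_cycle]
      refine Finset.sum_congr rfl fun l _ => Finset.sum_congr rfl fun j _ =>
        Finset.sum_congr rfl fun i _ => ?_
      ring
    · ext j i
      rw [← htr i j, Matrix.sum_apply]
      simp only [hchoi, Matrix.mul_apply, conjTranspose_apply, of_apply]
      rw [Finset.sum_comm]
      simp only [mul_comm]

/-- A difference of quantum channels has Choi matrix of vanishing trace. -/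
lemma IsChannel.trace_choi_sub (h : IsChannel m n L) (h' : IsChannel m n L') :
    (choi m n (L - L')).trace = 0 := by
  rw [choi_sub, trace_sub, sub_eq_zero]
  simp only [trace, diag_apply, Fintype.sum_prod_type, (isChannel_iff_choi.1 h).2,
    (isChannel_iff_choi.1 h').2]

/-- Moving from a channel along a difference of channels preserves the partial trace condition, so
only positivity matters. -/
lemma IsChannel.add_smul_sub {L₁ L₂ : Matrix (Fin m) (Fin m) ℂ →ₗ[ℂ] Matrix (Fin n) (Fin n) ℂ}
    (h : IsChannel m n L) (h₁ : IsChannel m n L₁) (h₂ : IsChannel m n L₂) {c : ℂ}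
    (hpos : (choi m n L + c • choi m n (L₁ - L₂)).PosSemidef) :
    IsChannel m n (L + c • (L₁ - L₂)) := by
  refine isChannel_iff_choi.2 ⟨hpos, fun i j => ?_⟩
  simp only [choi_add, choi_smul, choi_sub, Matrix.add_apply, Matrix.smul_apply, Matrix.sub_apply,
    smul_eq_mul, Finset.sum_add_distrib, ← Finset.mul_sum, Finset.sum_sub_distrib,
    (isChannel_iff_choi.1 h).2, (isChannel_iff_choi.1 h₁).2, (isChannel_iff_choi.1 h₂).2,
    sub_self, mul_zero, add_zero]

/-- If a channel is a proper convex combination of distinct channels `L₁` and `L₂`, then moving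
from it in the direction `L₁ - L₂` one meets a channel of smaller Choi rank. -/
lemma IsChannel.exists_add_smul_sub_rank_lt
    {L₁ L₂ : Matrix (Fin m) (Fin m) ℂ →ₗ[ℂ] Matrix (Fin n) (Fin n) ℂ}
    (h : IsChannel m n L) (h₁ : IsChannel m n L₁) (h₂ : IsChannel m n L₂) (hne : L₁ ≠ L₂)
    {a b : ℝ} (ha : 0 < a) (hb : 0 < b) (hL : L = (a : ℂ) • L₁ + (b : ℂ) • L₂) :
    ∃ s : ℝ, 0 < s ∧ IsChannel m n (L + (s : ℂ) • (L₁ - L₂)) ∧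
      (choi m n (L + (s : ℂ) • (L₁ - L₂))).rank < (choi m n L).rank := by
  have hp₁ := (isChannel_iff_choi.1 h₁).1
  have hp₂ := (isChannel_iff_choi.1 h₂).1
  obtain ⟨s, hs, hpos, hrk⟩ := (isChannel_iff_choi.1 h).1.exists_posSemidef_add_smul_rank_lt
    (D := choi m n (L₁ - L₂)) (hp₁.1.sub hp₂.1) (h₁.trace_choi_sub h₂)
    (fun h0 => hne (choi_injective (sub_eq_zero.1 h0))) (fun x hx => by
      rw [hL] at hx
      obtain ⟨hx₁, hx₂⟩ := hp₁.mulVec_eq_zero_of_smul_add_smul hp₂ ha hb hx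
      rw [choi_sub, sub_mulVec, hx₁, hx₂, sub_zero])
  exact ⟨s, hs, h.add_smul_sub h₁ h₂ hpos, hrk⟩

end Choi

/-- a nonextreme channel with `rank Z(L) = k` is a proper convex combination of
two channels of Choi rank at most `k − 1`. -/
theorem stmt11 (m n k : ℕ) (L : Matrix (Fin m) (Fin m) ℂ →ₗ[ℂ] Matrix (Fin n) (Fin n) ℂ)
    (hL : IsChannel m n L) (hrank : (choi m n L).rank = k)
    (hnotext : ¬ IsExtremeChannel m n L) :
    ∃ (L₁ L₂ : Matrix (Fin m) (Fin m) ℂ →ₗ[ℂ] Matrix (Fin n) (Fin n) ℂ) (t : ℝ),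
      IsChannel m n L₁ ∧ IsChannel m n L₂ ∧
      (choi m n L₁).rank ≤ k - 1 ∧ (choi m n L₂).rank ≤ k - 1 ∧
      0 < t ∧ t < 1 ∧ L = (t : ℂ) • L₁ + ((1 - t : ℝ) : ℂ) • L₂ := by
  have hex : ∃ L₁ L₂, IsChannel m n L₁ ∧ IsChannel m n L₂ ∧ ∃ t : ℝ, 0 < t ∧ t < 1 ∧
      L = (t : ℂ) • L₁ + ((1 - t : ℝ) : ℂ) • L₂ ∧ L₁ ≠ L₂ := by
    by_contra! hcon
    refine hnotext ⟨hL, fun L₁ L₂ h₁ h₂ t ht0 ht1 ht => ?_⟩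
    obtain rfl := hcon L₁ L₂ h₁ h₂ t ht0 ht1 ht
    have : L = L₁ := by
      rw [ht, ← add_smul, ← Complex.ofReal_add, add_sub_cancel, Complex.ofReal_one, one_smul]
    exact ⟨this.symm, this.symm⟩
  obtain ⟨L₁, L₂, h₁, h₂, t, ht0, ht1, ht, hne⟩ := hex
  obtain ⟨s, hs, hch, hrk⟩ :=
    hL.exists_add_smul_sub_rank_lt h₁ h₂ hne ht0 (sub_pos.2 ht1) ht
  obtain ⟨s', hs', hch', hrk'⟩ :=
    hL.exists_add_smul_sub_rank_lt h₂ h₁ hne.symm (sub_pos.2 ht1) ht0 (by rw [ht, add_comm])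
  have hsum : 0 < s + s' := add_pos hs hs'
  refine ⟨_, _, s' / (s + s'), hch, hch', by omega, by omega, div_pos hs' hsum,
    (div_lt_one hsum).2 (by linarith), ?_⟩
  have hc : ((s : ℂ) + s') ≠ 0 := by exact_mod_cast hsum.ne'
  have h1 : ((s' / (s + s') : ℝ) : ℂ) = s' / (s + s') := by push_cast; rfl
  have h2 : ((1 - s' / (s + s') : ℝ) : ℂ) = s / (s + s') := by
    push_cast
    field_simp
    ring
  rw [h1, h2]
  match_scalars <;> field_simp <;> ring
end

section
/- Let m = p + q with p,q ≥ 1, and let L ∈ L_{m,n} be a decomposable quantum channel: there exist quantum channels L_1 ∈ L_{p,n} and L_2 ∈ L_{q,n} such that, writing each X ∈ ℂ^{m×m} in 2×2 block form with diagonal blocks X_{11} ∈ ℂ^{p×p} and X_{22} ∈ ℂ^{q×q}, one has L(X) = L_1(X_{11}) + L_2(X_{22}). If L_1 is not an extreme point of L_{p,n}, or L_2 is not an extreme point of L_{q,n}, or rank Z(L_1) · rank Z(L_2) > p·q, then L is not an extreme point of L_{m,n}. -/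
open Matrix
open scoped ComplexOrder

/-- The map `X ↦ ∑ G a b • K a X (K b)*` with coefficient matrix `G` and operators `K`. -/
noncomputable def krausMap {ι : Type*} [Fintype ι] {m n : ℕ} (K : ι → Matrix (Fin n) (Fin m) ℂ)
    (G : Matrix ι ι ℂ) : Matrix (Fin m) (Fin m) ℂ →ₗ[ℂ] Matrix (Fin n) (Fin n) ℂ where
  toFun X := ∑ a, ∑ b, G a b • (K a * X * (K b)ᴴ)
  map_add' X Y := by
    simp only [Matrix.mul_add, Matrix.add_mul, smul_add, Finset.sum_add_distrib]
  map_smul' c X := by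
    simp only [Matrix.mul_smul, Matrix.smul_mul, Finset.smul_sum, RingHom.id_apply,
      smul_comm c]

theorem krausMap_apply {ι : Type*} [Fintype ι] {m n : ℕ} (K : ι → Matrix (Fin n) (Fin m) ℂ)
    (G : Matrix ι ι ℂ) (X : Matrix (Fin m) (Fin m) ℂ) :
    krausMap K G X = ∑ a, ∑ b, G a b • (K a * X * (K b)ᴴ) := rfl

theorem isChannel_krausMap {ι : Type*} [Fintype ι] {m n : ℕ}
    (K : ι → Matrix (Fin n) (Fin m) ℂ) {G : Matrix ι ι ℂ} (hG : G.PosSemidef)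
    (hK : ∑ a, ∑ b, G a b • ((K b)ᴴ * K a) = 1) : IsChannel m n (krausMap K G) := by
  obtain ⟨r, v, rfl⟩ := Matrix.posSemidef_iff_eq_sum_vecMulVec.mp hG
  have hsum : ∀ {l : ℕ} (F : ι → ι → Matrix (Fin l) (Fin l) ℂ),
      ∑ a, ∑ b, (∑ c, vecMulVec (v c) (star (v c))) a b • F a b =
        ∑ c, ∑ a, ∑ b, (v c a * star (v c b)) • F a b := by
    intro l F
    simp only [Matrix.sum_apply, vecMulVec_apply, Pi.star_apply, Finset.sum_smul]
    rw [Finset.sum_congr rfl fun a _ => Finset.sum_comm, Finset.sum_comm]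
  refine ⟨r, fun c => ∑ a, v c a • K a, fun X => ?_, ?_⟩
  · rw [krausMap_apply, hsum]
    refine Finset.sum_congr rfl fun c _ => ?_
    simp only [conjTranspose_sum, conjTranspose_smul, Matrix.sum_mul, Matrix.mul_sum,
      Matrix.smul_mul, Matrix.mul_smul, Finset.smul_sum, smul_smul]
    rw [Finset.sum_comm]
    simp only [mul_comm]
  · rw [← hK, hsum]
    refine Finset.sum_congr rfl fun c _ => ?_
    simp only [conjTranspose_sum, conjTranspose_smul, Matrix.sum_mul, Matrix.mul_sum,
      Matrix.smul_mul, Matrix.mul_smul, Finset.smul_sum, smul_smul]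

theorem krausMap_one_apply {ι : Type*} [Fintype ι] [DecidableEq ι] {m n : ℕ}
    (K : ι → Matrix (Fin n) (Fin m) ℂ) (X : Matrix (Fin m) (Fin m) ℂ) :
    krausMap K 1 X = ∑ a, K a * X * (K a)ᴴ := by
  simp [krausMap_apply, Matrix.one_apply, ite_smul]

theorem isChannel_of_kraus {ι : Type*} [Fintype ι] {m n : ℕ}
    (K : ι → Matrix (Fin n) (Fin m) ℂ)
    {L : Matrix (Fin m) (Fin m) ℂ →ₗ[ℂ] Matrix (Fin n) (Fin n) ℂ}
    (hL : ∀ X, L X = ∑ a, K a * X * (K a)ᴴ) (hK : ∑ a, (K a)ᴴ * K a = 1) :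
    IsChannel m n L := by
  classical
  have hLK : L = krausMap K 1 := LinearMap.ext fun X => by rw [hL, krausMap_one_apply]
  rw [hLK]
  exact isChannel_krausMap K PosSemidef.one (by simpa [Matrix.one_apply, ite_smul] using hK)

section
open scoped Matrix.Norms.L2Operator MatrixOrder

theorem exists_pos_one_add_smul_posSemidef {ι : Type*} [Fintype ι] [DecidableEq ι]
    {G : Matrix ι ι ℂ} (hG : G.IsHermitian) :
    ∃ ε : ℝ, 0 < ε ∧ (1 + (ε : ℂ) • G).PosSemidef ∧ (1 - (ε : ℂ) • G).PosSemidef := by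
  have hbound : ∀ H : Matrix ι ι ℂ, H.IsHermitian →
      (1 + (((‖H‖ + 1)⁻¹ : ℝ) : ℂ) • H).PosSemidef := by
    intro H hH
    have hs : IsSelfAdjoint H := hH
    have h1 := hs.neg_algebraMap_norm_le_self
    have h2 : ((algebraMap ℝ (Matrix ι ι ℂ) ‖H‖) + H).PosSemidef := by
      rw [← Matrix.nonneg_iff_posSemidef, add_comm]
      exact neg_le_iff_add_nonneg.mp h1
    have hpos : 0 < ‖H‖ + 1 := by positivity
    have h3 : ((1 : Matrix ι ι ℂ) + (algebraMap ℝ (Matrix ι ι ℂ) ‖H‖ + H)).PosSemidef :=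
      PosSemidef.one.add h2
    have h4 := h3.smul (α := ℂ) (a := (((‖H‖ + 1)⁻¹ : ℝ) : ℂ))
      (by exact_mod_cast (inv_pos.mpr hpos).le)
    convert h4 using 1
    have h5 : algebraMap ℝ (Matrix ι ι ℂ) ‖H‖ = ((‖H‖ : ℝ) : ℂ) • 1 := by
      rw [Algebra.algebraMap_eq_smul_one]; ext i j; simp
    have h6 : ((‖H‖ : ℂ) + 1) ≠ 0 := by exact_mod_cast hpos.ne'
    rw [h5, ← add_assoc, smul_add]
    congr 1
    ext i j
    simp only [Matrix.smul_apply, Matrix.add_apply, smul_eq_mul]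
    push_cast
    field_simp
    ring
  refine ⟨(‖G‖ + 1)⁻¹, by positivity, hbound G hG, ?_⟩
  have := hbound (-G) hG.neg
  rwa [norm_neg, smul_neg, ← sub_eq_add_neg] at this

end

theorem not_isExtremeChannel_of_perturbation {ι : Type*} [Fintype ι] {m n : ℕ}
    (K : ι → Matrix (Fin n) (Fin m) ℂ)
    {L : Matrix (Fin m) (Fin m) ℂ →ₗ[ℂ] Matrix (Fin n) (Fin n) ℂ}
    (hL : ∀ X, L X = ∑ a, K a * X * (K a)ᴴ) (hK : ∑ a, (K a)ᴴ * K a = 1)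
    {G : Matrix ι ι ℂ} (hG : G.IsHermitian) (hG₀ : ∑ a, ∑ b, G a b • ((K b)ᴴ * K a) = 0)
    (hne : krausMap K G ≠ 0) : ¬ IsExtremeChannel m n L := by
  classical
  rintro ⟨-, hext⟩
  obtain ⟨ε, hε, hplus, hminus⟩ := exists_pos_one_add_smul_posSemidef hG
  have hadd : krausMap K (1 + (ε : ℂ) • G) = L + (ε : ℂ) • krausMap K G := by
    refine LinearMap.ext fun X => ?_
    rw [LinearMap.add_apply, hL, ← krausMap_one_apply]
    simp only [krausMap_apply, LinearMap.smul_apply, Matrix.add_apply, Matrix.smul_apply, add_smul,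
      Finset.sum_add_distrib, Finset.smul_sum, smul_eq_mul, mul_smul]
  have hsub : krausMap K (1 - (ε : ℂ) • G) = L - (ε : ℂ) • krausMap K G := by
    refine LinearMap.ext fun X => ?_
    rw [LinearMap.sub_apply, hL, ← krausMap_one_apply]
    simp only [krausMap_apply, LinearMap.smul_apply, Matrix.sub_apply, Matrix.smul_apply, sub_smul,
      Finset.sum_sub_distrib, Finset.smul_sum, smul_eq_mul, mul_smul]
  have hK₁ : ∑ a, ∑ b, (1 : Matrix ι ι ℂ) a b • ((K b)ᴴ * K a) = 1 := by
    simpa [Matrix.one_apply, ite_smul] using hK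
  have hεG : ∑ a, ∑ b, (ε : ℂ) • G a b • ((K b)ᴴ * K a) = 0 := by
    simp only [← Finset.smul_sum, hG₀, smul_zero]
  have hc₁ := isChannel_krausMap K hplus (by
    simp only [Matrix.add_apply, Matrix.smul_apply, add_smul, Finset.sum_add_distrib, smul_assoc,
      hK₁, hεG, add_zero])
  have hc₂ := isChannel_krausMap K hminus (by
    simp only [Matrix.sub_apply, Matrix.smul_apply, sub_smul, Finset.sum_sub_distrib, smul_assoc,
      hK₁, hεG, sub_zero])
  have hmid := (hext _ _ hc₁ hc₂ (1 / 2) (by norm_num) (by norm_num) (by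
    rw [hadd, hsub]
    push_cast
    module)).1
  rw [hadd, add_eq_left, smul_eq_zero] at hmid
  exact hmid.elim (by exact_mod_cast hε.ne') hne

theorem exists_sum_smul_eq_zero_of_finrank_lt {α β κ μ V : Type*} [Fintype κ] [Fintype μ]
    [AddCommGroup V] [Module ℂ V] [FiniteDimensional ℂ V]
    (M : Matrix α κ ℂ) (N : Matrix β μ ℂ) (W : κ → μ → V)
    (h : Module.finrank ℂ V < M.rank * N.rank) :
    ∃ C : Matrix κ μ ℂ, ∑ i, ∑ j, C i j • W i j = 0 ∧
      ∃ x y, ∑ i, ∑ j, C i j * (M x i * star (N y j)) ≠ 0 := by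
  classical
  obtain ⟨σ, a, ha, haspan, haind⟩ := exists_linearIndependent' ℂ M.col
  obtain ⟨τ, b, hb, hbspan, hbind⟩ := exists_linearIndependent' ℂ N.col
  have := Fintype.ofInjective a ha
  have := Fintype.ofInjective b hb
  rw [rank_eq_finrank_span_cols, rank_eq_finrank_span_cols, ← haspan, ← hbspan,
    finrank_span_eq_card haind, finrank_span_eq_card hbind, ← Fintype.card_prod] at h
  have hdep : ¬ LinearIndependent ℂ (fun st : σ × τ => W (a st.1) (b st.2)) :=
    fun hli => h.not_ge hli.fintype_card_le_finrank
  obtain ⟨g, hg, ⟨s₀, t₀⟩, hne⟩ := Fintype.not_linearIndependent_iff.mp hdep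
  let C : Matrix κ μ ℂ := fun i j => ∑ st : σ × τ, if a st.1 = i then
    (if b st.2 = j then g st else 0) else 0
  refine ⟨C, ?_, ?_⟩
  · rw [← hg]
    simp only [C, Finset.sum_smul, ite_smul, zero_smul]
    rw [Finset.sum_congr rfl fun i _ => Finset.sum_comm, Finset.sum_comm]
    simp
  · by_contra! hzero
    have hsum : ∀ x y, ∑ s, (∑ t, g (s, t) * star (N y (b t))) * M x (a s) = 0 := by
      intro x y
      rw [← hzero x y]
      simp only [C, Finset.sum_mul, ite_mul, zero_mul]
      rw [Finset.sum_congr rfl fun i _ => Finset.sum_comm (s := (Finset.univ : Finset μ)),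
        Finset.sum_comm (s := (Finset.univ : Finset κ)), Fintype.sum_prod_type]
      simp [mul_comm, mul_left_comm]
    have hrow : ∀ y s, ∑ t, g (s, t) * star (N y (b t)) = 0 := by
      intro y
      refine Fintype.linearIndependent_iff.mp haind _ (funext fun x => ?_)
      simpa using hsum x y
    have := Fintype.linearIndependent_iff.mp hbind (fun t => star (g (s₀, t)))
      (funext fun y => by simpa using congrArg star (hrow y s₀)) t₀
    exact hne (star_eq_zero.mp this)

theorem rank_choi_eq_rank_kraus {m n k : ℕ}
    {L : Matrix (Fin m) (Fin m) ℂ →ₗ[ℂ] Matrix (Fin n) (Fin n) ℂ}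
    {A : Fin k → Matrix (Fin n) (Fin m) ℂ} (hL : ∀ X, L X = ∑ i, A i * X * (A i)ᴴ) :
    (choi m n L).rank = (Matrix.of fun (x : Fin m × Fin n) i => A i x.2 x.1).rank := by
  rw [← rank_self_mul_conjTranspose (Matrix.of _)]
  refine congrArg (Matrix.rank (R := ℂ)) ?_
  ext x y
  simp only [choi, hL, Matrix.of_apply, Matrix.sum_apply, Matrix.mul_apply (M := Matrix.of _),
    conjTranspose_apply]
  refine Finset.sum_congr rfl fun i _ => ?_
  simp [Matrix.mul_apply, Matrix.single_apply, ite_and]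

theorem sum_conjTranspose_mul_directSum {p q m n k l : ℕ} {P : Matrix (Fin p) (Fin m) ℂ}
    {Q : Matrix (Fin q) (Fin m) ℂ} (hPQ : Pᴴ * P + Qᴴ * Q = 1)
    {A : Fin k → Matrix (Fin n) (Fin p) ℂ} {B : Fin l → Matrix (Fin n) (Fin q) ℂ}
    (hA : ∑ i, (A i)ᴴ * A i = 1) (hB : ∑ j, (B j)ᴴ * B j = 1) :
    ∑ a, (Sum.elim (fun i => A i * P) (fun j => B j * Q) a)ᴴ *
      Sum.elim (fun i => A i * P) (fun j => B j * Q) a = 1 := by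
  rw [← hPQ]
  calc _ = Pᴴ * (∑ i, (A i)ᴴ * A i) * P + Qᴴ * (∑ j, (B j)ᴴ * B j) * Q := by
        simp [Matrix.mul_sum, Matrix.sum_mul, Matrix.mul_assoc]
    _ = _ := by simp [hA, hB]

theorem isChannel_directSum {p q m n : ℕ} {P : Matrix (Fin p) (Fin m) ℂ}
    {Q : Matrix (Fin q) (Fin m) ℂ} (hPQ : Pᴴ * P + Qᴴ * Q = 1)
    {L : Matrix (Fin m) (Fin m) ℂ →ₗ[ℂ] Matrix (Fin n) (Fin n) ℂ}
    {L₁ : Matrix (Fin p) (Fin p) ℂ →ₗ[ℂ] Matrix (Fin n) (Fin n) ℂ}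
    {L₂ : Matrix (Fin q) (Fin q) ℂ →ₗ[ℂ] Matrix (Fin n) (Fin n) ℂ}
    (h : ∀ X, L X = L₁ (P * X * Pᴴ) + L₂ (Q * X * Qᴴ))
    (hL₁ : IsChannel p n L₁) (hL₂ : IsChannel q n L₂) : IsChannel m n L := by
  obtain ⟨k, A, hA, hA₁⟩ := hL₁
  obtain ⟨l, B, hB, hB₁⟩ := hL₂
  refine isChannel_of_kraus (Sum.elim (fun i => A i * P) (fun j => B j * Q)) (fun X => ?_) ?_
  · simp [h, hA, hB, Matrix.mul_assoc]
  · exact sum_conjTranspose_mul_directSum hPQ hA₁ hB₁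

theorem isExtremeChannel_left_of_directSum {p q m n : ℕ} {P : Matrix (Fin p) (Fin m) ℂ}
    {Q : Matrix (Fin q) (Fin m) ℂ} (hP : P * Pᴴ = 1) (hQP : Q * Pᴴ = 0)
    (hPQ : Pᴴ * P + Qᴴ * Q = 1)
    {L : Matrix (Fin m) (Fin m) ℂ →ₗ[ℂ] Matrix (Fin n) (Fin n) ℂ}
    {L₁ : Matrix (Fin p) (Fin p) ℂ →ₗ[ℂ] Matrix (Fin n) (Fin n) ℂ}
    {L₂ : Matrix (Fin q) (Fin q) ℂ →ₗ[ℂ] Matrix (Fin n) (Fin n) ℂ}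
    (h : ∀ X, L X = L₁ (P * X * Pᴴ) + L₂ (Q * X * Qᴴ))
    (hL₁ : IsChannel p n L₁) (hL₂ : IsChannel q n L₂) (hL : IsExtremeChannel m n L) :
    IsExtremeChannel p n L₁ := by
  refine ⟨hL₁, fun M₁ M₂ hM₁ hM₂ t ht₀ ht₁ hM => ?_⟩
  let S : (Matrix (Fin p) (Fin p) ℂ →ₗ[ℂ] Matrix (Fin n) (Fin n) ℂ) →
      Matrix (Fin m) (Fin m) ℂ →ₗ[ℂ] Matrix (Fin n) (Fin n) ℂ := fun M =>
    { toFun := fun X => M (P * X * Pᴴ) + L₂ (Q * X * Qᴴ)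
      map_add' := fun X Y => by
        simp only [Matrix.mul_add, Matrix.add_mul, map_add]; abel
      map_smul' := fun c X => by
        simp only [Matrix.mul_smul, Matrix.smul_mul, map_smul, smul_add, RingHom.id_apply] }
  have hS : ∀ M X, S M X = M (P * X * Pᴴ) + L₂ (Q * X * Qᴴ) := fun _ _ => rfl
  have hinj : ∀ M, S M = L → M = L₁ := by
    intro M hML
    refine LinearMap.ext fun X => ?_
    have hPX : P * (Pᴴ * X * P) * Pᴴ = X := by
      rw [show P * (Pᴴ * X * P) * Pᴴ = (P * Pᴴ) * X * (P * Pᴴ) by simp only [Matrix.mul_assoc],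
        hP, Matrix.one_mul, Matrix.mul_one]
    have hQX : Q * (Pᴴ * X * P) * Qᴴ = 0 := by
      rw [show Q * (Pᴴ * X * P) * Qᴴ = (Q * Pᴴ) * X * (P * Qᴴ) by simp only [Matrix.mul_assoc],
        hQP, Matrix.zero_mul, Matrix.zero_mul]
    have hX := LinearMap.congr_fun hML (Pᴴ * X * P)
    rwa [hS, h, hPX, hQX, map_zero, add_zero, add_zero] at hX
  have hconv : L = (t : ℂ) • S M₁ + ((1 - t : ℝ) : ℂ) • S M₂ := by
    refine LinearMap.ext fun X => ?_
    rw [h, hM]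
    simp only [LinearMap.add_apply, LinearMap.smul_apply, hS]
    push_cast
    module
  obtain ⟨h₁, h₂⟩ := hL.2 _ _ (isChannel_directSum hPQ (hS M₁) hM₁ hL₂)
    (isChannel_directSum hPQ (hS M₂) hM₂ hL₂) t ht₀ ht₁ hconv
  exact ⟨hinj _ h₁, hinj _ h₂⟩

theorem not_isExtremeChannel_directSum_of_rank {p q m n : ℕ} {P : Matrix (Fin p) (Fin m) ℂ}
    {Q : Matrix (Fin q) (Fin m) ℂ} (hP : P * Pᴴ = 1) (hQ : Q * Qᴴ = 1) (hQP : Q * Pᴴ = 0)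
    (hPQ : Pᴴ * P + Qᴴ * Q = 1)
    {L : Matrix (Fin m) (Fin m) ℂ →ₗ[ℂ] Matrix (Fin n) (Fin n) ℂ}
    {L₁ : Matrix (Fin p) (Fin p) ℂ →ₗ[ℂ] Matrix (Fin n) (Fin n) ℂ}
    {L₂ : Matrix (Fin q) (Fin q) ℂ →ₗ[ℂ] Matrix (Fin n) (Fin n) ℂ}
    (h : ∀ X, L X = L₁ (P * X * Pᴴ) + L₂ (Q * X * Qᴴ))
    (hL₁ : IsChannel p n L₁) (hL₂ : IsChannel q n L₂)
    (hrank : p * q < (choi p n L₁).rank * (choi q n L₂).rank) : ¬ IsExtremeChannel m n L := by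
  obtain ⟨k, A, hA, hA₁⟩ := hL₁
  obtain ⟨l, B, hB, hB₁⟩ := hL₂
  rw [rank_choi_eq_rank_kraus hA, rank_choi_eq_rank_kraus hB] at hrank
  obtain ⟨C, hC, x, y, hxy⟩ := exists_sum_smul_eq_zero_of_finrank_lt _ _
    (fun i j => (B j)ᴴ * A i) (by simpa [Module.finrank_matrix, mul_comm q p] using hrank)
  have hCQP : ∑ i, ∑ j, C i j • (Qᴴ * ((B j)ᴴ * (A i * P))) = 0 := by
    calc _ = Qᴴ * (∑ i, ∑ j, C i j • ((B j)ᴴ * A i)) * P := by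
          simp [Matrix.mul_sum, Matrix.sum_mul, Matrix.mul_assoc]
      _ = 0 := by rw [hC, Matrix.mul_zero, Matrix.zero_mul]
  have hCPQ : ∑ j, ∑ i, star (C i j) • (Pᴴ * ((A i)ᴴ * (B j * Q))) = 0 := by
    rw [Finset.sum_comm]
    simpa [conjTranspose_sum, Matrix.mul_assoc] using congrArg conjTranspose hCQP
  refine not_isExtremeChannel_of_perturbation
    (Sum.elim (fun i => A i * P) (fun j => B j * Q)) (fun X => ?_) ?_
    (G := Matrix.fromBlocks 0 C Cᴴ 0) ?_ ?_ fun hzero => hxy ?_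
  · simp [h, hA, hB, Matrix.mul_assoc]
  · exact sum_conjTranspose_mul_directSum hPQ hA₁ hB₁
  · simp [Matrix.IsHermitian, Matrix.fromBlocks_conjTranspose]
  · simpa [Matrix.mul_assoc, hCQP] using hCPQ
  · have hX := LinearMap.congr_fun hzero (Pᴴ * Matrix.single x.1 y.1 (1 : ℂ) * Q)
    have hleft : ∀ i j, A i * P * (Pᴴ * Matrix.single x.1 y.1 (1 : ℂ) * Q) * (B j * Q)ᴴ =
        A i * Matrix.single x.1 y.1 (1 : ℂ) * (B j)ᴴ := by
      intro i j
      rw [conjTranspose_mul, show A i * P * (Pᴴ * Matrix.single x.1 y.1 (1 : ℂ) * Q) * (Qᴴ * (B j)ᴴ) =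
        A i * (P * Pᴴ) * Matrix.single x.1 y.1 (1 : ℂ) * (Q * Qᴴ) * (B j)ᴴ by
          simp only [Matrix.mul_assoc], hP, hQ, Matrix.mul_one, Matrix.mul_one]
    have hright : ∀ i j, B j * Q * (Pᴴ * Matrix.single x.1 y.1 (1 : ℂ) * Q) * (A i * P)ᴴ = 0 := by
      intro i j
      rw [show B j * Q * (Pᴴ * Matrix.single x.1 y.1 (1 : ℂ) * Q) * (A i * P)ᴴ =
        B j * (Q * Pᴴ) * Matrix.single x.1 y.1 (1 : ℂ) * Q * (A i * P)ᴴ by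
          simp only [Matrix.mul_assoc], hQP]
      simp
    have hent := congrFun (congrFun hX x.2) y.2
    simp only [krausMap_apply, Fintype.sum_sum_type, Sum.elim_inl, Sum.elim_inr,
      fromBlocks_apply₁₁, fromBlocks_apply₁₂, fromBlocks_apply₂₁, fromBlocks_apply₂₂,
      hleft, hright, Matrix.zero_apply, zero_smul, smul_zero, Finset.sum_const_zero, zero_add,
      add_zero, Matrix.sum_apply, Matrix.smul_apply, LinearMap.zero_apply] at hent
    rw [← hent]
    refine Finset.sum_congr rfl fun i _ => Finset.sum_congr rfl fun j _ => ?_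
    simp [Matrix.mul_apply, Matrix.single_apply, ite_and]

/-- a decomposable channel `L = L₁ ⊕ L₂` is not extreme if `L₁` is not extreme,
or `L₂` is not extreme, or `rank Z(L₁) · rank Z(L₂) > p·q`. -/
theorem stmt13 (p q n : ℕ) (hp : 1 ≤ p) (hq : 1 ≤ q)
    (L : Matrix (Fin (p + q)) (Fin (p + q)) ℂ →ₗ[ℂ] Matrix (Fin n) (Fin n) ℂ)
    (L₁ : Matrix (Fin p) (Fin p) ℂ →ₗ[ℂ] Matrix (Fin n) (Fin n) ℂ)
    (L₂ : Matrix (Fin q) (Fin q) ℂ →ₗ[ℂ] Matrix (Fin n) (Fin n) ℂ)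
    (hL : IsChannel (p + q) n L) (hL₁ : IsChannel p n L₁) (hL₂ : IsChannel q n L₂)
    (hdec : ∀ X : Matrix (Fin (p + q)) (Fin (p + q)) ℂ,
      L X = L₁ (Matrix.of fun i j => X (Fin.castAdd q i) (Fin.castAdd q j)) +
            L₂ (Matrix.of fun i j => X (Fin.natAdd p i) (Fin.natAdd p j)))
    (h : ¬ IsExtremeChannel p n L₁ ∨ ¬ IsExtremeChannel q n L₂ ∨
      p * q < (choi p n L₁).rank * (choi q n L₂).rank) :
    ¬ IsExtremeChannel (p + q) n L := by
  obtain ⟨P, hPdef⟩ : ∃ P : Matrix (Fin p) (Fin (p + q)) ℂ,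
      P = Matrix.of fun i j => if Fin.castAdd q i = j then 1 else 0 := ⟨_, rfl⟩
  obtain ⟨Q, hQdef⟩ : ∃ Q : Matrix (Fin q) (Fin (p + q)) ℂ,
      Q = Matrix.of fun i j => if Fin.natAdd p i = j then 1 else 0 := ⟨_, rfl⟩
  have hcompr : ∀ X, L X = L₁ (P * X * Pᴴ) + L₂ (Q * X * Qᴴ) := by
    intro X
    rw [hdec]
    congr 2 <;> ext i j <;> simp [hPdef, hQdef, Matrix.mul_apply]
  have hPP : P * Pᴴ = 1 := by
    ext i j
    simp [hPdef, Matrix.mul_apply, Matrix.one_apply, eq_comm]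
  have hQQ : Q * Qᴴ = 1 := by
    ext i j
    simp [hQdef, Matrix.mul_apply, Matrix.one_apply, eq_comm]
  have hQP : Q * Pᴴ = 0 := by
    ext i j
    have hij : Fin.natAdd p i ≠ Fin.castAdd q j := by
      simp only [ne_eq, Fin.ext_iff, Fin.val_castAdd, Fin.val_natAdd]
      omega
    simp [hPdef, hQdef, Matrix.mul_apply, hij]
  have hPQ : Pᴴ * P + Qᴴ * Q = 1 := by
    ext i j
    have hsum := Fin.sum_univ_add fun x : Fin (p + q) =>
      (if x = j then (1 : ℂ) else 0) * (if x = i then 1 else 0)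
    simp only [ite_mul, one_mul, zero_mul, Finset.sum_ite_eq', Finset.mem_univ, if_true] at hsum
    simp [hPdef, hQdef, Matrix.mul_apply, Matrix.one_apply, ← hsum, eq_comm (a := i) (b := j)]
  intro hext
  rcases h with h | h | h
  · exact h (isExtremeChannel_left_of_directSum hPP hQP hPQ hcompr hL₁ hL₂ hext)
  · refine h (isExtremeChannel_left_of_directSum hQQ ?_ ((add_comm _ _).trans hPQ)
      (fun X => (hcompr X).trans (add_comm _ _)) hL₂ hL₁ hext)
    simpa using congrArg conjTranspose hQP
  · exact not_isExtremeChannel_directSum_of_rank hPP hQQ hQP hPQ hcompr hL₁ hL₂ h hext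
end
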